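/- Let 𝒜 be a finite set and π₁, π₂ ∈ Pre(𝒜). Then (a,b) belongs to the join π₁ ∨ π₂ = (π₁ ∪ π₂)⁺ if and only if either (i) (a,b) ∈ π₁ ∪ π₂, or (ii) there exists a finite chain a = c₀, c₁, …, c_ℓ = b (ℓ ≥ 1) such that each consecutive pair (c_{m−1}, c_m) belongs to the symmetric difference π₁ Δ π₂. -/

import Mathlib

/-- A preference relation (preorder) on `A`: a reflexive and transitive
binary relation, viewed as a subset of `A × A`. -/
def IsPref {A : Type*} (π : Set (A × A)) : Prop :=
  (∀ a : A, (a, a) ∈ π) ∧ ∀ a b c : A, (a, b) ∈ π → (b, c) ∈ π → (a, c) ∈ π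

/-- The reflexive-transitive closure of a binary relation `π ⊆ A × A`:
`(a,b) ∈ π⁺` iff `a = b` or there is a finite chain `a = c₀, c₁, …, c_ℓ = b`
(`ℓ ≥ 1`) with each consecutive pair in `π`. -/
def rtClosure {A : Type*} (π : Set (A × A)) : Set (A × A) :=
  {p | p.1 = p.2 ∨ ∃ ℓ : ℕ, 1 ≤ ℓ ∧ ∃ c : Fin (ℓ + 1) → A,
    c 0 = p.1 ∧ c (Fin.last ℓ) = p.2 ∧
    ∀ m : Fin ℓ, (c m.castSucc, c m.succ) ∈ π}

/-- Chains indexed by `Fin` amount to the transitive closure. -/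
theorem chain_iff_transGen {A : Type*} (S : Set (A × A)) (a b : A) :
    (∃ ℓ : ℕ, 1 ≤ ℓ ∧ ∃ c : Fin (ℓ + 1) → A,
        c 0 = a ∧ c (Fin.last ℓ) = b ∧
        ∀ m : Fin ℓ, (c m.castSucc, c m.succ) ∈ S) ↔
      Relation.TransGen (fun x y => (x, y) ∈ S) a b := by
  constructor
  · rintro ⟨ℓ, hl, c, rfl, rfl, h⟩
    induction ℓ with
    | zero => omega
    | succ n ih =>
      have hlast := h (Fin.last n)
      rw [Fin.succ_last] at hlast
      rcases Nat.eq_zero_or_pos n with rfl | hn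
      · exact Relation.TransGen.single hlast
      · exact Relation.TransGen.tail
          (ih hn (fun i => c i.castSucc) (fun m => h m.castSucc)) hlast
  · intro h
    induction h with
    | @single b h =>
      refine ⟨1, le_rfl, ![a, b], rfl, rfl, ?_⟩
      intro m
      fin_cases m
      exact h
    | @tail b d _ hbc ih =>
      obtain ⟨ℓ, hl, c, h0, h1, h⟩ := ih
      refine ⟨ℓ + 1, by omega, Fin.snoc (α := fun _ => A) c d, ?_, ?_, ?_⟩
      · rw [← h0]
        exact Fin.snoc_castSucc (α := fun _ => A) d c 0
      · exact Fin.snoc_last (α := fun _ => A) d c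
      · intro m
        refine Fin.lastCases ?_ (fun m => ?_) m
        · rw [Fin.succ_last, Fin.snoc_last, Fin.snoc_castSucc, h1]
          exact hbc
        · rw [Fin.succ_castSucc, Fin.snoc_castSucc, Fin.snoc_castSucc]
          exact h m

/-- Two consecutive steps in the union merge, or both lie in the symmetric difference. -/
theorem merge_or_symmDiff {A : Type*} {π₁ π₂ : Set (A × A)}
    (h₁ : IsPref π₁) (h₂ : IsPref π₂) {a b c : A}
    (hab : (a, b) ∈ π₁ ∪ π₂) (hbc : (b, c) ∈ π₁ ∪ π₂) :
    (a, c) ∈ π₁ ∪ π₂ ∨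
      ((a, b) ∈ (π₁ \ π₂) ∪ (π₂ \ π₁) ∧ (b, c) ∈ (π₁ \ π₂) ∪ (π₂ \ π₁)) := by
  have t₁ := h₁.2 a b c
  have t₂ := h₂.2 a b c
  simp only [Set.mem_union, Set.mem_sdiff] at *
  tauto

/-- Appending a union step to a symmetric-difference chain. -/
theorem append_step {A : Type*} {π₁ π₂ : Set (A × A)}
    (h₁ : IsPref π₁) (h₂ : IsPref π₂) {a b : A}
    (h : Relation.TransGen (fun x y => (x, y) ∈ (π₁ \ π₂) ∪ (π₂ \ π₁)) a b) :
    ∀ c, (b, c) ∈ π₁ ∪ π₂ → (a, c) ∈ π₁ ∪ π₂ ∨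
      Relation.TransGen (fun x y => (x, y) ∈ (π₁ \ π₂) ∪ (π₂ \ π₁)) a c := by
  have hsub : ∀ p, p ∈ (π₁ \ π₂) ∪ (π₂ \ π₁) → p ∈ π₁ ∪ π₂ := fun p hp =>
    hp.imp (fun h => h.1) (fun h => h.1)
  induction h with
  | single h =>
    intro c hc
    rcases merge_or_symmDiff h₁ h₂ (hsub _ h) hc with hnew | ⟨_, hnew⟩
    · exact Or.inl hnew
    · exact Or.inr (Relation.TransGen.tail (Relation.TransGen.single h) hnew)
  | tail hab hbc ih =>
    intro d hd
    rcases merge_or_symmDiff h₁ h₂ (hsub _ hbc) hd with hnew | ⟨_, hnew⟩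
    · exact ih d hnew
    · exact Or.inr ((hab.tail hbc).tail hnew)

/-- For a finite set `A` and preference relations `π₁, π₂` on `A`, a pair
`(a,b)` belongs to the join `π₁ ∨ π₂ = (π₁ ∪ π₂)⁺` iff either
(i) `(a,b) ∈ π₁ ∪ π₂`, or (ii) there is a chain `a = c₀, …, c_ℓ = b` (`ℓ ≥ 1`)
all of whose steps lie in the symmetric difference `π₁ Δ π₂`. -/
theorem mem_join_iff {A : Type*} [Finite A] (π₁ π₂ : Set (A × A))
    (h₁ : IsPref π₁) (h₂ : IsPref π₂) (a b : A) :
    (a, b) ∈ rtClosure (π₁ ∪ π₂) ↔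
      (a, b) ∈ π₁ ∪ π₂ ∨
      ∃ ℓ : ℕ, 1 ≤ ℓ ∧ ∃ c : Fin (ℓ + 1) → A,
        c 0 = a ∧ c (Fin.last ℓ) = b ∧
        ∀ m : Fin ℓ, (c m.castSucc, c m.succ) ∈ (π₁ \ π₂) ∪ (π₂ \ π₁) := by
  rw [chain_iff_transGen]
  change (a = b ∨ _) ↔ _
  rw [chain_iff_transGen]
  constructor
  · rintro (rfl | h)
    · exact Or.inl (Or.inl (h₁.1 a))
    · change Relation.TransGen (fun x y => (x, y) ∈ π₁ ∪ π₂) a b at h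
      induction h with
      | single h => exact Or.inl h
      | tail _ hbc ih =>
        rcases ih with h | h
        · rcases merge_or_symmDiff h₁ h₂ h hbc with hnew | ⟨hnew, hstep⟩
          · exact Or.inl hnew
          · exact Or.inr (Relation.TransGen.tail (Relation.TransGen.single hnew) hstep)
        · exact append_step h₁ h₂ h _ hbc
  · rintro (h | h)
    · exact Or.inr (Relation.TransGen.single h)
    · right
      change Relation.TransGen (fun x y => (x, y) ∈ π₁ ∪ π₂) a b
      have hsub : ∀ p, p ∈ (π₁ \ π₂) ∪ (π₂ \ π₁) → p ∈ π₁ ∪ π₂ := fun p hp =>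
        hp.imp (fun h => h.1) (fun h => h.1)
      induction h with
      | single h => exact Relation.TransGen.single (hsub _ h)
      | tail _ h ih => exact Relation.TransGen.tail ih (hsub _ h)
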